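/- arXiv:2501.19071 — 2 statements merged into one kernel-verified Lean document; each statement's English description precedes it below -/
import Mathlib

section
/- Riesz–Markov–Kakutani representation for nonnegative Radon functionals on compactly supported Lipschitz functions: let X be a locally compact, separable metric space and let T be a real-valued map defined on the real-valued Lipschitz functions on X with compact support, such that T(φ + ψ) = T(φ) + T(ψ) and T(c·φ) = c·T(φ) for all such φ, ψ and all c ∈ ℝ, and T(φ) ≥ 0 whenever φ ≥ 0. Then there exists a unique locally finite Borel measure μ on X such that T(φ) = ∫ φ dμ for every Lipschitz function φ on X with compact support. -/
open MeasureTheory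

/-!
By the M. Riesz extension theorem, a positive functional on a subspace of an ordered vector space
extends positively to the whole space as soon as every vector is dominated by a vector of the
subspace. Compactly supported Lipschitz functions dominate `C_c(X, ℝ)`, because a multiple of a
thickened indicator of the support of `f` lies above `f`; so existence follows from the classical
Riesz–Markov–Kakutani theorem. For uniqueness, the thickened indicators of a compact set `K` are
eventually compactly supported Lipschitz functions, and their integrals converge to the measure
of `K`.
-/

open Filter Metric Set Topology

open scoped CompactlySupported

theorem exists_positiveLinearMap_extension {E : Type*} [AddCommGroup E] [PartialOrder E]
    [IsOrderedAddMonoid E] [Module ℝ E] [PosSMulMono ℝ E] (p : Submodule ℝ E)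
    (hp : ∀ y, ∃ x ∈ p, y ≤ x) (F : p →ₚ[ℝ] ℝ) :
    ∃ G : E →ₚ[ℝ] ℝ, ∀ x : p, G x = F x := by
  obtain ⟨g, hgF, hg⟩ := riesz_extension (PointedCone.positive ℝ E) ⟨p, F.toLinearMap⟩
    (fun _ hx ↦ F.map_nonneg hx) fun y ↦ by
      obtain ⟨x, hxp, hyx⟩ := hp (-y)
      exact ⟨⟨x, hxp⟩, neg_le_iff_add_nonneg.mp hyx⟩
  exact ⟨.mk₀ g hg, hgF⟩

instance {X R β : Type*} [TopologicalSpace X] [TopologicalSpace β] [Zero β] [PartialOrder β]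
    [Zero R] [Preorder R] [SMulZeroClass R β] [ContinuousConstSMul R β] [PosSMulMono R β] :
    PosSMulMono R C_c(X, β) :=
  PosSMulMono.lift (fun f x ↦ f x) Iff.rfl fun _ _ ↦ rfl

section ThickenedIndicator

variable {X : Type*} [PseudoEMetricSpace X] {δ : ℝ}

theorem lipschitzWith_coe_thickenedIndicator (hδ : 0 < δ) (s : Set X) :
    LipschitzWith δ.toNNReal⁻¹ fun x ↦ (thickenedIndicator hδ s x : ℝ) :=
  NNReal.isometry_coe.lipschitzWith_iff _ |>.mpr (lipschitzWith_thickenedIndicator hδ s)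

theorem thickenedIndicator_eq_zero_of_notMem_cthickening (hδ : 0 < δ) {s : Set X} {x : X}
    (hx : x ∉ cthickening δ s) : thickenedIndicator hδ s x = 0 :=
  thickenedIndicator_zero hδ s fun h ↦ hx (thickening_subset_cthickening δ s h)

theorem hasCompactSupport_coe_thickenedIndicator (hδ : 0 < δ) {s : Set X}
    (hs : IsCompact (cthickening δ s)) :
    HasCompactSupport fun x ↦ (thickenedIndicator hδ s x : ℝ) :=
  .intro hs fun _ hx ↦ by simp [thickenedIndicator_eq_zero_of_notMem_cthickening hδ hx]

variable [MeasurableSpace X] [OpensMeasurableSpace X]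

theorem tendsto_integral_thickenedIndicator_of_isCompact_cthickening (μ : Measure X)
    [IsFiniteMeasureOnCompacts μ] {K : Set X} (hK : IsClosed K)
    (hδK : IsCompact (cthickening δ K)) {u : ℕ → ℝ} (u_pos : ∀ n, 0 < u n) (u_le : ∀ n, u n ≤ δ)
    (u_lim : Tendsto u atTop (𝓝 0)) :
    Tendsto (fun n ↦ ∫ x, (thickenedIndicator (u_pos n) K x : ℝ) ∂μ) atTop (𝓝 (μ.real K)) := by
  have : IsFiniteMeasure (μ.restrict (cthickening δ K)) := ⟨by simpa using hδK.measure_lt_top⟩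
  have h := tendsto_integral_thickenedIndicator_of_isClosed (μ.restrict (cthickening δ K)) hK
    u_pos u_lim
  rw [measureReal_restrict_apply hK.measurableSet,
    inter_eq_self_of_subset_left (self_subset_cthickening K)] at h
  refine h.congr fun n ↦ setIntegral_eq_integral_of_forall_compl_eq_zero fun x hx ↦ ?_
  simp [thickenedIndicator_eq_zero_of_notMem_cthickening (u_pos n)
    fun h ↦ hx (cthickening_mono (u_le n) K h)]

end ThickenedIndicator

section Uniqueness

variable {X : Type*} [PseudoMetricSpace X] [LocallyCompactSpace X] [MeasurableSpace X]
  [BorelSpace X] {μ ν : Measure X}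

theorem measure_eq_of_isCompact_of_integral_lipschitz_eq [IsFiniteMeasureOnCompacts μ]
    [IsFiniteMeasureOnCompacts ν]
    (h : ∀ φ : X → ℝ, (∃ L, LipschitzWith L φ) → HasCompactSupport φ →
      ∫ x, φ x ∂μ = ∫ x, φ x ∂ν)
    {K : Set X} (hK : IsCompact K) : μ K = ν K := by
  suffices μ.real (closure K) = ν.real (closure K) by
    rwa [measureReal_eq_measureReal_iff hK.closure.measure_ne_top hK.closure.measure_ne_top,
      hK.measure_closure, hK.measure_closure] at this
  obtain ⟨δ, δ_pos, hδK⟩ := hK.closure.exists_isCompact_cthickening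
  obtain ⟨u, -, hu, u_lim⟩ := exists_seq_strictAnti_tendsto' δ_pos
  have u_pos (n : ℕ) : 0 < u n := (hu n).1
  have u_le (n : ℕ) : u n ≤ δ := (hu n).2.le
  have integral_eq (n : ℕ) : ∫ x, (thickenedIndicator (u_pos n) (closure K) x : ℝ) ∂μ =
      ∫ x, (thickenedIndicator (u_pos n) (closure K) x : ℝ) ∂ν :=
    h _ ⟨_, lipschitzWith_coe_thickenedIndicator (u_pos n) _⟩ <|
      hasCompactSupport_coe_thickenedIndicator (u_pos n) <|
        hδK.of_isClosed_subset isClosed_cthickening (cthickening_mono (u_le n) _)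
  have tendsto_integral (ρ : Measure X) [IsFiniteMeasureOnCompacts ρ] :=
    tendsto_integral_thickenedIndicator_of_isCompact_cthickening ρ isClosed_closure hδK
      u_pos u_le u_lim
  exact tendsto_nhds_unique ((tendsto_integral μ).congr integral_eq) (tendsto_integral ν)

theorem measure_ext_of_integral_lipschitz_eq [μ.Regular] [ν.Regular]
    (h : ∀ φ : X → ℝ, (∃ L, LipschitzWith L φ) → HasCompactSupport φ →
      ∫ x, φ x ∂μ = ∫ x, φ x ∂ν) :
    μ = ν :=
  Measure.OuterRegular.ext_isOpen fun _ hU ↦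
    Measure.Regular.innerRegular.eq_of_innerRegularWRT_of_forall_eq Measure.Regular.innerRegular
      (fun _ hK ↦ measure_eq_of_isCompact_of_integral_lipschitz_eq h hK) hU

end Uniqueness

section Existence

/-- The subspace of `C_c(X, E)` formed by the Lipschitz functions, with no uniform bound on the
Lipschitz constants; it is the domain of the functionals to be represented. -/
def lipschitzCompactlySupported (𝕜 X E : Type*) [PseudoEMetricSpace X] [NormedField 𝕜]
    [SeminormedAddCommGroup E] [NormedSpace 𝕜 E] : Submodule 𝕜 C_c(X, E) where
  carrier := {f | ∃ L, LipschitzWith L f}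
  add_mem' := fun ⟨_, hf⟩ ⟨_, hg⟩ ↦ ⟨_, hf.add hg⟩
  zero_mem' := ⟨0, .const 0⟩
  smul_mem' := fun c _ ⟨_, hf⟩ ↦ ⟨_, (lipschitzWith_smul c).comp hf⟩

theorem exists_lipschitzCompactlySupported_ge {X : Type*} [PseudoMetricSpace X]
    [LocallyCompactSpace X] (f : C_c(X, ℝ)) : ∃ g ∈ lipschitzCompactlySupported ℝ X ℝ, f ≤ g := by
  obtain ⟨δ, δ_pos, hδ⟩ := f.hasCompactSupport.isCompact.exists_isCompact_cthickening
  obtain ⟨C, hC⟩ := f.hasCompactSupport.exists_bound_of_continuous f.continuous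
  have b_lip := lipschitzWith_coe_thickenedIndicator δ_pos (tsupport f)
  let b : C_c(X, ℝ) := ⟨⟨_, b_lip.continuous⟩, hasCompactSupport_coe_thickenedIndicator δ_pos hδ⟩
  refine ⟨C • b, Submodule.smul_mem _ C ⟨_, b_lip⟩, fun x ↦ ?_⟩
  change f x ≤ C * thickenedIndicator δ_pos (tsupport f) x
  by_cases hx : x ∈ tsupport f
  · simpa [thickenedIndicator_one δ_pos _ hx] using (le_abs_self (f x)).trans (hC x)
  · rw [image_eq_zero_of_notMem_tsupport hx]
    exact mul_nonneg ((norm_nonneg _).trans (hC x)) (NNReal.coe_nonneg _)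

variable {X : Type*} [MetricSpace X] [LocallyCompactSpace X] [MeasurableSpace X] [BorelSpace X]

theorem exists_regular_integral_eq (F : lipschitzCompactlySupported ℝ X ℝ →ₚ[ℝ] ℝ) :
    ∃ μ : Measure X, μ.Regular ∧
      ∀ f : lipschitzCompactlySupported ℝ X ℝ, F f = ∫ x, (f : C_c(X, ℝ)) x ∂μ := by
  obtain ⟨G, hG⟩ := exists_positiveLinearMap_extension _ exists_lipschitzCompactlySupported_ge F
  exact ⟨RealRMK.rieszMeasure G, inferInstance, fun f ↦
    (hG f).symm.trans (RealRMK.integral_rieszMeasure G f).symm⟩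

end Existence

theorem riesz_markov_kakutani_lipschitz_general
    (X : Type*) [MetricSpace X] [LocallyCompactSpace X] [MeasurableSpace X] [BorelSpace X]
    (T : (X → ℝ) → ℝ)
    (hadd : ∀ φ ψ : X → ℝ,
      (∃ L, LipschitzWith L φ) → HasCompactSupport φ →
      (∃ L, LipschitzWith L ψ) → HasCompactSupport ψ →
      T (φ + ψ) = T φ + T ψ)
    (hsmul : ∀ (c : ℝ) (φ : X → ℝ),
      (∃ L, LipschitzWith L φ) → HasCompactSupport φ → T (c • φ) = c * T φ)
    (hpos : ∀ φ : X → ℝ,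
      (∃ L, LipschitzWith L φ) → HasCompactSupport φ → (∀ x, 0 ≤ φ x) → 0 ≤ T φ) :
    ∃! μ : Measure X, μ.Regular ∧
      ∀ φ : X → ℝ, (∃ L, LipschitzWith L φ) → HasCompactSupport φ →
        T φ = ∫ x, φ x ∂μ := by
  let F : lipschitzCompactlySupported ℝ X ℝ →ₚ[ℝ] ℝ := .mk₀
    { toFun f := T (f : C_c(X, ℝ))
      map_add' f g := hadd _ _ f.2 f.1.hasCompactSupport g.2 g.1.hasCompactSupport
      map_smul' c f := hsmul c _ f.2 f.1.hasCompactSupport }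
    fun f hf ↦ hpos _ f.2 f.1.hasCompactSupport hf
  obtain ⟨μ, hμ, hF⟩ := exists_regular_integral_eq F
  have hT (φ : X → ℝ) (hφ : ∃ L, LipschitzWith L φ) (hφc : HasCompactSupport φ) :
      T φ = ∫ x, φ x ∂μ :=
    hF ⟨⟨⟨φ, hφ.choose_spec.continuous⟩, hφc⟩, hφ⟩
  refine ⟨μ, ⟨hμ, hT⟩, fun ν ⟨hν, hνT⟩ ↦ ?_⟩
  exact measure_ext_of_integral_lipschitz_eq fun φ hφ hφc ↦
    (hνT φ hφ hφc).symm.trans (hT φ hφ hφc)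

theorem regular_iff_isLocallyFiniteMeasure {X : Type*} [PseudoEMetricSpace X]
    [WeaklyLocallyCompactSpace X] [SigmaCompactSpace X] [MeasurableSpace X] [BorelSpace X]
    {μ : Measure X} : μ.Regular ↔ IsLocallyFiniteMeasure μ :=
  ⟨fun _ ↦ inferInstance, fun _ ↦ inferInstance⟩

/-- Riesz–Markov–Kakutani representation for nonnegative Radon functionals on compactly
supported Lipschitz functions: on a locally compact separable metric space, every
linear, nonnegative real functional on the compactly supported Lipschitz functions is
represented by integration against a unique locally finite Borel measure. -/
theorem riesz_markov_kakutani_lipschitz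
    (X : Type*) [MetricSpace X] [LocallyCompactSpace X]
    [TopologicalSpace.SeparableSpace X] [MeasurableSpace X] [BorelSpace X]
    (T : (X → ℝ) → ℝ)
    (hadd : ∀ φ ψ : X → ℝ,
      (∃ L, LipschitzWith L φ) → HasCompactSupport φ →
      (∃ L, LipschitzWith L ψ) → HasCompactSupport ψ →
      T (φ + ψ) = T φ + T ψ)
    (hsmul : ∀ (c : ℝ) (φ : X → ℝ),
      (∃ L, LipschitzWith L φ) → HasCompactSupport φ → T (c • φ) = c * T φ)
    (hpos : ∀ φ : X → ℝ,
      (∃ L, LipschitzWith L φ) → HasCompactSupport φ → (∀ x, 0 ≤ φ x) → 0 ≤ T φ) :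
    ∃! μ : Measure X, IsLocallyFiniteMeasure μ ∧
      ∀ φ : X → ℝ, (∃ L, LipschitzWith L φ) → HasCompactSupport φ →
        T φ = ∫ x, φ x ∂μ := by
  have : SecondCountableTopology X := UniformSpace.secondCountable_of_separable X
  simpa only [regular_iff_isLocallyFiniteMeasure] using
    riesz_markov_kakutani_lipschitz_general X T hadd hsmul hpos
end

section
/- Kantorovich duality on compact metric spaces: let X be a compact metric space, μ and ν Borel probability measures on X, and c : X × X → ℝ continuous. Then the supremum of ∫ c dπ over all couplings π of μ and ν is attained, and it equals the infimum of ∫ u dμ + ∫ v dν over all pairs of continuous functions u, v : X → ℝ satisfying c(x,y) ≤ u(x) + v(y) for all x, y ∈ X. -/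
open MeasureTheory

/-- A coupling of two Borel probability measures `μ, ν` on `X` is a Borel probability
measure on `X × X` whose marginals (pushforwards under the coordinate projections)
are `μ` and `ν`. -/
def IsCoupling {X : Type*} [MeasurableSpace X] (μ ν : Measure X)
    (π : Measure (X × X)) : Prop :=
  IsProbabilityMeasure π ∧ π.map Prod.fst = μ ∧ π.map Prod.snd = ν

/-!
The dual value is a sublinear functional of the cost. By Hahn–Banach it dominates a linear
functional on `C(X × Y, ℝ)` which agrees with it at `c`. This functional is positive, because the
dual value of a nonpositive cost is nonpositive, so by Riesz–Markov–Kakutani it is integration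
against a measure `π`. Testing the domination on `±u(x)` and `±v(y)` shows that `π` has marginals
`μ` and `ν`, so there is no duality gap.
-/

open scoped CompactlySupported BoundedContinuousFunction

/-- The measure `π` on `X × Y` has marginals `μ` and `ν`. This is the notion of a coupling for two
possibly different spaces and for measures of arbitrary mass. -/
structure HasMarginals {X Y : Type*} [MeasurableSpace X] [MeasurableSpace Y]
    (π : Measure (X × Y)) (μ : Measure X) (ν : Measure Y) : Prop where
  fst_eq : π.fst = μ
  snd_eq : π.snd = ν

/-- The values `∫ u dμ + ∫ v dν` of the admissible pairs in the dual problem with cost `c`; the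
dual value is their infimum. -/
def dualValues {X Y : Type*} [TopologicalSpace X] [TopologicalSpace Y] [MeasurableSpace X]
    [MeasurableSpace Y] (μ : Measure X) (ν : Measure Y) (c : X × Y → ℝ) : Set ℝ :=
  {r : ℝ | ∃ (u : X → ℝ) (v : Y → ℝ), Continuous u ∧ Continuous v ∧
    (∀ x y, c (x, y) ≤ u x + v y) ∧ r = ∫ x, u x ∂μ + ∫ y, v y ∂ν}

lemma integrable_of_continuous {K : Type*} [TopologicalSpace K] [CompactSpace K]
    [MeasurableSpace K] [OpensMeasurableSpace K] (μ : Measure K) [IsFiniteMeasure μ] {f : K → ℝ}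
    (hf : Continuous f) : Integrable f μ :=
  hf.integrable_of_hasCompactSupport (.of_compactSpace f)

lemma eq_of_forall_integral_le {Ω : Type*} [TopologicalSpace Ω] [HasOuterApproxClosed Ω]
    [MeasurableSpace Ω] [BorelSpace Ω] {μ ν : Measure Ω} [IsFiniteMeasure μ] [IsFiniteMeasure ν]
    (h : ∀ f : Ω →ᵇ ℝ, ∫ x, f x ∂μ ≤ ∫ x, f x ∂ν) : μ = ν := by
  refine ext_of_forall_integral_eq_of_IsFiniteMeasure fun f => (h f).antisymm ?_
  simpa only [BoundedContinuousFunction.coe_neg, Pi.neg_apply, integral_neg, neg_le_neg_iff]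
    using h (-f)

lemma exists_measure_integral_eq_of_nonneg {K : Type*} [TopologicalSpace K] [CompactSpace K]
    [T2Space K] [MeasurableSpace K] [BorelSpace K] (g : C(K, ℝ) →ₗ[ℝ] ℝ)
    (hg : ∀ f, 0 ≤ f → 0 ≤ g f) :
    ∃ π : Measure K, IsFiniteMeasure π ∧ ∀ f : C(K, ℝ), ∫ x, f x ∂π = g f := by
  let forgetSupport : C_c(K, ℝ) →ₗ[ℝ] C(K, ℝ) :=
    { toFun := CompactlySupportedContinuousMap.toContinuousMap
      map_add' := fun _ _ => rfl
      map_smul' := fun _ _ => rfl }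
  let L : C_c(K, ℝ) →ₚ[ℝ] ℝ := .mk₀ (g ∘ₗ forgetSupport) fun f hf => hg f hf
  exact ⟨RealRMK.rieszMeasure L, inferInstance, fun f =>
    RealRMK.integral_rieszMeasure L (CompactlySupportedContinuousMap.continuousMapEquiv f)⟩

lemma exists_linearMap_le_sublinear_eq_at {E : Type*} [AddCommGroup E] [Module ℝ E] (N : E → ℝ)
    (N_hom : ∀ t : ℝ, 0 < t → ∀ x, N (t • x) = t * N x)
    (N_add : ∀ x y, N (x + y) ≤ N x + N y) (a : E) :
    ∃ g : E →ₗ[ℝ] ℝ, g a = N a ∧ ∀ x, g x ≤ N x := by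
  have N_zero : N 0 = 0 := by
    have h := N_hom 2 two_pos 0
    rw [smul_zero] at h
    linarith
  have mul_le (t : ℝ) : t * N a ≤ N (t • a) := by
    rcases lt_trichotomy t 0 with ht | rfl | ht
    · have h := N_add (t • a) (-t • a)
      rw [neg_smul, add_neg_cancel, N_zero, ← neg_smul, N_hom (-t) (neg_pos.2 ht)] at h
      linarith
    · rw [zero_mul, zero_smul, N_zero]
    · exact (N_hom t ht a).ge
  have well_defined (t : ℝ) (ht : t • a = 0) : t • N a = 0 := by
    rcases smul_eq_zero.1 ht with rfl | rfl
    · exact zero_smul ℝ _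
    · rw [N_zero, smul_zero]
  let onSpan := LinearPMap.mkSpanSingleton' (σ := RingHom.id ℝ) a (N a) well_defined
  obtain ⟨g, g_ext, g_le⟩ := exists_extension_of_le_sublinear onSpan N N_hom N_add <| by
    rintro ⟨x, hx⟩
    obtain ⟨t, rfl⟩ := Submodule.mem_span_singleton.1 hx
    exact (LinearPMap.mkSpanSingleton'_apply a (N a) well_defined t hx).trans_le (mul_le t)
  have ha := Submodule.mem_span_singleton_self (R := ℝ) a
  exact ⟨g, (g_ext ⟨a, ha⟩).trans
    (LinearPMap.mkSpanSingleton'_apply_self a (N a) well_defined ha), g_le⟩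

section Marginals

variable {X Y : Type*} [MeasurableSpace X] [MeasurableSpace Y]
  {μ : Measure X} {ν : Measure Y}

lemma HasMarginals.isFiniteMeasure [IsFiniteMeasure μ] {π : Measure (X × Y)}
    (hπ : HasMarginals π μ ν) : IsFiniteMeasure π :=
  ⟨by rw [← Measure.fst_univ, hπ.fst_eq]; exact measure_lt_top μ Set.univ⟩

lemma exists_hasMarginals [IsFiniteMeasure μ] [IsFiniteMeasure ν]
    (hμν : μ Set.univ = ν Set.univ) : ∃ π : Measure (X × Y), HasMarginals π μ ν := by
  rcases eq_or_ne (μ Set.univ) 0 with hμ | hμ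
  · have hν : ν = 0 := Measure.measure_univ_eq_zero.1 (hμν ▸ hμ)
    rw [Measure.measure_univ_eq_zero] at hμ
    exact ⟨0, by rw [hμ, Measure.fst_zero], by rw [hν, Measure.snd_zero]⟩
  · have inv_mul_mass : (μ Set.univ)⁻¹ * μ Set.univ = 1 :=
      ENNReal.inv_mul_cancel hμ (measure_ne_top μ _)
    refine ⟨(μ Set.univ)⁻¹ • μ.prod ν, ?_, ?_⟩
    · rw [Measure.fst, Measure.map_smul, Measure.map_fst_prod, ← hμν, smul_smul, inv_mul_mass,
        one_smul]
    · rw [Measure.snd, Measure.map_smul, Measure.map_snd_prod, smul_smul, inv_mul_mass, one_smul]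

end Marginals

lemma isCoupling_iff_hasMarginals {X : Type*} [MeasurableSpace X] {μ ν : Measure X}
    [IsProbabilityMeasure μ] {π : Measure (X × X)} : IsCoupling μ ν π ↔ HasMarginals π μ ν := by
  refine ⟨fun ⟨_, hfst, hsnd⟩ => ⟨hfst, hsnd⟩, fun hπ => ⟨⟨?_⟩, hπ.fst_eq, hπ.snd_eq⟩⟩
  rw [← Measure.fst_univ, hπ.fst_eq, measure_univ]

section DualValues

open scoped Pointwise

variable {X Y : Type*} [TopologicalSpace X] [MeasurableSpace X] [TopologicalSpace Y]
  [MeasurableSpace Y] {μ : Measure X} {ν : Measure Y}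

lemma smul_dualValues_subset (μ : Measure X) (ν : Measure Y) (c : X × Y → ℝ) {t : ℝ}
    (ht : 0 ≤ t) : t • dualValues μ ν c ⊆ dualValues μ ν (t • c) := by
  rintro _ ⟨_, ⟨u, v, hu, hv, huv, rfl⟩, rfl⟩
  refine ⟨t • u, t • v, hu.const_smul t, hv.const_smul t, fun x y => ?_, ?_⟩
  · simpa only [Pi.smul_apply, smul_eq_mul, mul_add] using
      mul_le_mul_of_nonneg_left (huv x y) ht
  · simp only [Pi.smul_apply, smul_eq_mul, integral_const_mul, mul_add]

lemma dualValues_smul (μ : Measure X) (ν : Measure Y) (c : X × Y → ℝ) {t : ℝ} (ht : 0 < t) :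
    dualValues μ ν (t • c) = t • dualValues μ ν c := by
  refine Set.Subset.antisymm ?_ (smul_dualValues_subset μ ν c ht.le)
  rw [Set.subset_smul_set_iff₀ ht.ne']
  simpa only [inv_smul_smul₀ ht.ne'] using
    smul_dualValues_subset μ ν (t • c) (inv_nonneg.2 ht.le)

variable [CompactSpace X] [CompactSpace Y]

lemma dualValues_nonempty (μ : Measure X) (ν : Measure Y) {c : X × Y → ℝ} (hc : Continuous c) :
    (dualValues μ ν c).Nonempty := by
  obtain ⟨M, hM⟩ := (isCompact_range hc).bddAbove
  refine ⟨_, fun _ => M, fun _ => 0, continuous_const, continuous_const, fun x y => ?_, rfl⟩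
  simpa only [add_zero] using hM ⟨(x, y), rfl⟩

variable [OpensMeasurableSpace X] [OpensMeasurableSpace Y] [IsFiniteMeasure μ]

lemma HasMarginals.integral_le_of_mem_dualValues [SecondCountableTopologyEither X Y]
    {π : Measure (X × Y)} (hπ : HasMarginals π μ ν) {c : X × Y → ℝ} (hc : Continuous c) {r : ℝ}
    (hr : r ∈ dualValues μ ν c) : ∫ z, c z ∂π ≤ r := by
  obtain ⟨u, v, hu, hv, huv, rfl⟩ := hr
  have := hπ.isFiniteMeasure
  have hu_int := integrable_of_continuous π (hu.comp continuous_fst)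
  have hv_int := integrable_of_continuous π (hv.comp continuous_snd)
  calc ∫ z, c z ∂π
      ≤ ∫ z, u z.1 + v z.2 ∂π :=
        integral_mono (integrable_of_continuous π hc) (hu_int.add hv_int) fun z => huv z.1 z.2
    _ = ∫ z, u z.1 ∂π + ∫ z, v z.2 ∂π := integral_add hu_int hv_int
    _ = ∫ x, u x ∂π.fst + ∫ y, v y ∂π.snd := by
        rw [Measure.fst, Measure.snd,
          integral_map measurable_fst.aemeasurable hu.aestronglyMeasurable,
          integral_map measurable_snd.aemeasurable hv.aestronglyMeasurable]
    _ = ∫ x, u x ∂μ + ∫ y, v y ∂ν := by rw [hπ.fst_eq, hπ.snd_eq]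

variable [IsFiniteMeasure ν]

lemma dualValues_add_subset (f g : X × Y → ℝ) :
    dualValues μ ν f + dualValues μ ν g ⊆ dualValues μ ν (f + g) := by
  rintro _ ⟨_, ⟨u, v, hu, hv, huv, rfl⟩, _, ⟨u', v', hu', hv', huv', rfl⟩, rfl⟩
  refine ⟨u + u', v + v', hu.add hu', hv.add hv', fun x y => ?_, ?_⟩
  · exact (add_le_add (huv x y) (huv' x y)).trans_eq (add_add_add_comm _ _ _ _)
  · rw [integral_add' (integrable_of_continuous μ hu) (integrable_of_continuous μ hu'),
      integral_add' (integrable_of_continuous ν hv) (integrable_of_continuous ν hv')]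
    exact add_add_add_comm _ _ _ _

variable [SecondCountableTopologyEither X Y]

lemma bddBelow_dualValues (hμν : μ Set.univ = ν Set.univ) {c : X × Y → ℝ} (hc : Continuous c) :
    BddBelow (dualValues μ ν c) :=
  have ⟨_, hπ⟩ := exists_hasMarginals hμν
  ⟨_, fun _ => hπ.integral_le_of_mem_dualValues hc⟩

lemma sInf_dualValues_add_le (hμν : μ Set.univ = ν Set.univ) {f g : X × Y → ℝ}
    (hf : Continuous f) (hg : Continuous g) :
    sInf (dualValues μ ν (f + g)) ≤ sInf (dualValues μ ν f) + sInf (dualValues μ ν g) := by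
  have hf_ne := dualValues_nonempty μ ν hf
  have hg_ne := dualValues_nonempty μ ν hg
  rw [← csInf_add hf_ne (bddBelow_dualValues hμν hf) hg_ne (bddBelow_dualValues hμν hg)]
  exact csInf_le_csInf (bddBelow_dualValues hμν (hf.add hg)) (hf_ne.add hg_ne)
    (dualValues_add_subset f g)

lemma exists_linearMap_le_sInf_dualValues (hμν : μ Set.univ = ν Set.univ) (c : C(X × Y, ℝ)) :
    ∃ g : C(X × Y, ℝ) →ₗ[ℝ] ℝ, g c = sInf (dualValues μ ν c) ∧
      ∀ f : C(X × Y, ℝ), g f ≤ sInf (dualValues μ ν f) := by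
  refine exists_linearMap_le_sublinear_eq_at (fun f : C(X × Y, ℝ) => sInf (dualValues μ ν f))
    (fun t ht f => ?_) (fun f g => sInf_dualValues_add_le hμν f.continuous g.continuous) c
  rw [ContinuousMap.coe_smul, dualValues_smul μ ν f ht, Real.sInf_smul_of_nonneg ht.le,
    smul_eq_mul]

lemma nonneg_of_forall_le_sInf_dualValues (hμν : μ Set.univ = ν Set.univ)
    {g : C(X × Y, ℝ) →ₗ[ℝ] ℝ} (hg : ∀ f : C(X × Y, ℝ), g f ≤ sInf (dualValues μ ν f))
    {f : C(X × Y, ℝ)} (hf : 0 ≤ f) : 0 ≤ g f := by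
  have zero_mem : 0 ∈ dualValues μ ν (-f : C(X × Y, ℝ)) :=
    ⟨0, 0, continuous_zero, continuous_zero, fun x y => by simpa using hf (x, y), by simp⟩
  have h := (hg (-f)).trans (csInf_le (bddBelow_dualValues hμν (-f).continuous) zero_mem)
  rwa [map_neg, neg_nonpos] at h

end DualValues

section Attainment

variable {X Y : Type*}
  [TopologicalSpace X] [CompactSpace X] [HasOuterApproxClosed X]
  [TopologicalSpace Y] [CompactSpace Y] [HasOuterApproxClosed Y]
  [SecondCountableTopologyEither X Y]
  [MeasurableSpace X] [BorelSpace X] [MeasurableSpace Y] [BorelSpace Y]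
  {μ : Measure X} {ν : Measure Y} [IsFiniteMeasure μ] [IsFiniteMeasure ν]

lemma hasMarginals_of_forall_integral_le (hμν : μ Set.univ = ν Set.univ)
    {π : Measure (X × Y)} [IsFiniteMeasure π]
    (h : ∀ f : C(X × Y, ℝ), ∫ z, f z ∂π ≤ sInf (dualValues μ ν f)) : HasMarginals π μ ν where
  fst_eq := eq_of_forall_integral_le fun u => by
    let f : C(X × Y, ℝ) := u.toContinuousMap.comp .fst
    rw [Measure.fst, integral_map measurable_fst.aemeasurable u.continuous.aestronglyMeasurable]
    exact (h f).trans (csInf_le (bddBelow_dualValues hμν f.continuous)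
      ⟨u, 0, u.continuous, continuous_zero, fun x y => by simp [f], by simp⟩)
  snd_eq := eq_of_forall_integral_le fun v => by
    let f : C(X × Y, ℝ) := v.toContinuousMap.comp .snd
    rw [Measure.snd, integral_map measurable_snd.aemeasurable v.continuous.aestronglyMeasurable]
    exact (h f).trans (csInf_le (bddBelow_dualValues hμν f.continuous)
      ⟨0, v, continuous_zero, v.continuous, fun x y => by simp [f], by simp⟩)

lemma exists_hasMarginals_integral_eq_sInf_dualValues [T2Space X] [T2Space Y]
    (hμν : μ Set.univ = ν Set.univ) {c : X × Y → ℝ} (hc : Continuous c) :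
    ∃ π : Measure (X × Y), HasMarginals π μ ν ∧ ∫ z, c z ∂π = sInf (dualValues μ ν c) := by
  obtain ⟨g, hgc, hg⟩ := exists_linearMap_le_sInf_dualValues hμν ⟨c, hc⟩
  obtain ⟨π, _, hπ⟩ := exists_measure_integral_eq_of_nonneg g
    fun _ => nonneg_of_forall_le_sInf_dualValues hμν hg
  exact ⟨π, hasMarginals_of_forall_integral_le hμν fun f => (hπ f).trans_le (hg f),
    (hπ ⟨c, hc⟩).trans hgc⟩

end Attainment

theorem kantorovich_duality_general {X Y : Type*}
    [TopologicalSpace X] [CompactSpace X] [T2Space X] [HasOuterApproxClosed X]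
    [TopologicalSpace Y] [CompactSpace Y] [T2Space Y] [HasOuterApproxClosed Y]
    [SecondCountableTopologyEither X Y]
    [MeasurableSpace X] [BorelSpace X] [MeasurableSpace Y] [BorelSpace Y]
    {μ : Measure X} {ν : Measure Y} [IsFiniteMeasure μ] [IsFiniteMeasure ν]
    (hμν : μ Set.univ = ν Set.univ) {c : X × Y → ℝ} (hc : Continuous c) :
    ∃ π₀ : Measure (X × Y), HasMarginals π₀ μ ν ∧
      (∀ π : Measure (X × Y), HasMarginals π μ ν → ∫ z, c z ∂π ≤ ∫ z, c z ∂π₀) ∧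
      ∫ z, c z ∂π₀ = sInf (dualValues μ ν c) := by
  obtain ⟨π₀, hπ₀, heq⟩ := exists_hasMarginals_integral_eq_sInf_dualValues hμν hc
  refine ⟨π₀, hπ₀, fun π hπ => ?_, heq⟩
  rw [heq]
  exact le_csInf (dualValues_nonempty μ ν hc) fun _ => hπ.integral_le_of_mem_dualValues hc

/-- Kantorovich duality on compact metric spaces: for a continuous cost `c`, the
supremum of `∫ c dπ` over couplings `π` of `μ` and `ν` is attained by some `π₀`, and its
value equals the infimum of `∫ u dμ + ∫ v dν` over continuous `u, v` with
`c(x,y) ≤ u(x) + v(y)` for all `x, y`. -/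
theorem kantorovich_duality
    (X : Type*) [MetricSpace X] [CompactSpace X] [MeasurableSpace X] [BorelSpace X]
    (μ ν : Measure X) [IsProbabilityMeasure μ] [IsProbabilityMeasure ν]
    (c : X × X → ℝ) (hc : Continuous c) :
    ∃ π₀ : Measure (X × X), IsCoupling μ ν π₀ ∧
      (∀ π : Measure (X × X), IsCoupling μ ν π → ∫ z, c z ∂π ≤ ∫ z, c z ∂π₀) ∧
      ∫ z, c z ∂π₀ =
        sInf {r : ℝ | ∃ u v : X → ℝ, Continuous u ∧ Continuous v ∧
          (∀ x y : X, c (x, y) ≤ u x + v y) ∧ r = ∫ x, u x ∂μ + ∫ x, v x ∂ν} := by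
  simp only [isCoupling_iff_hasMarginals]
  exact kantorovich_duality_general (by rw [measure_univ, measure_univ]) hc
end
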